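/- Assume n ≤ m and let i be an integer with 1 ≤ i ≤ 2N−1 and i ≠ N. If a₀,…,a_{m+n} and a′₀,…,a′_{m+n} are complex numbers with a₀ = a′₀ = 1 such that both ∑_{s=0}^{m+n} aₛ·z^{(m+n−s)N+i}·w^{Ns} and ∑_{s=0}^{m+n} a′ₛ·z^{(m+n−s)N+i}·w^{Ns} are quasi-invariant, then aₛ = a′ₛ for all s = 0,…,m+n; that is, the quasi-invariant of this form with leading coefficient 1 is unique. -/

import Mathlib

open MvPolynomial Finset

noncomputable section

/-- The polynomial ring `R = ℂ[z,w]`. -/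
abbrev R2 : Type := MvPolynomial (Fin 2) ℂ

/-- `z`, the first variable. -/
def zP : R2 := X 0

/-- `w`, the second variable (playing the role of `z̄`). -/
def wP : R2 := X 1

/-- `ε = exp(πi/N)`, a primitive `2N`-th root of unity. -/
def eps (N : ℕ) : ℂ := Complex.exp ((Real.pi : ℂ) * Complex.I / (N : ℂ))

/-- The reflection `σⱼ : z ↦ ε^j w, w ↦ ε^{-j} z` as a `ℂ`-algebra endomorphism. -/
def dihRefl (N j : ℕ) : R2 →ₐ[ℂ] R2 :=
  aeval (fun k : Fin 2 => if k = 0 then C (eps N ^ j) * X 1 else C (eps N ^ (-(j : ℤ))) * X 0)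

/-- The multiplicity `mⱼ`: `m` for even `j`, `n` for odd `j`. -/
def mult (m n j : ℕ) : ℕ := if Even j then m else n

/-- Quasi-invariance for the dihedral system `I₂(2N)` with multiplicities `(m,n)`. -/
def IsQuasiInv (N m n : ℕ) (p : R2) : Prop :=
  ∀ j < 2 * N, (zP - C (eps N ^ j) * wP) ^ (2 * mult m n j + 1) ∣ dihRefl N j p - p

/-- The dehomogenised form (`w = 1`) of the candidate quasi-invariant. -/
def qPoly (N M i : ℕ) (b : ℕ → ℂ) : Polynomial ℂ :=
  ∑ s ∈ Finset.range (M + 1), Polynomial.C (b s) * Polynomial.X ^ ((M - s) * N + i)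

/-- The dehomogenised form of its mirror image. -/
def kPoly (N M : ℕ) (b : ℕ → ℂ) : Polynomial ℂ :=
  ∑ s ∈ Finset.range (M + 1), Polynomial.C (b s) * Polynomial.X ^ (N * s)

/-- Setting `w = 1`. -/
def dehom : R2 →ₐ[ℂ] Polynomial ℂ :=
  aeval (fun k : Fin 2 => if k = 0 then Polynomial.X else 1)

lemma eps_prim (N : ℕ) (hN : 1 ≤ N) : IsPrimitiveRoot (eps N) (2 * N) := by
  have h := Complex.isPrimitiveRoot_exp (2 * N) (by omega)
  have hN0 : (N : ℂ) ≠ 0 := by exact_mod_cast (by omega : N ≠ 0)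
  convert h using 1
  unfold eps
  congr 1
  push_cast
  field_simp

lemma eps_ne (N : ℕ) : eps N ≠ 0 := Complex.exp_ne_zero _

lemma dehom_C (c : ℂ) : dehom (C c) = Polynomial.C c := by
  simp [dehom]

lemma dehom_z : dehom (X 0) = Polynomial.X := by simp [dehom]

lemma dehom_w : dehom (X 1) = 1 := by simp [dehom]

lemma dehom_q (N M i : ℕ) (b : ℕ → ℂ) :
    dehom (∑ s ∈ Finset.range (M + 1), C (b s) * zP ^ ((M - s) * N + i) * wP ^ (N * s))
      = qPoly N M i b := by
  simp [qPoly, zP, wP, dehom_C, dehom_z, dehom_w]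

lemma dehom_k (N M i j : ℕ) (hN : 1 ≤ N) (b : ℕ → ℂ) :
    dehom (dihRefl N j
      (∑ s ∈ Finset.range (M + 1), C (b s) * zP ^ ((M - s) * N + i) * wP ^ (N * s)))
      = Polynomial.C (eps N ^ (j * (M * N + i))) * kPoly N M b := by
  have hz : dihRefl N j zP = C (eps N ^ j) * X 1 := by simp [dihRefl, zP]
  have hw : dihRefl N j wP = C (eps N ^ (-(j : ℤ))) * X 0 := by simp [dihRefl, wP]
  have hC : ∀ c, dihRefl N j (C c) = C c := fun c => by simp [dihRefl]
  rw [map_sum, map_sum, kPoly, Finset.mul_sum]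
  refine Finset.sum_congr rfl fun s hs => ?_
  have hs' : s ≤ M := by have := Finset.mem_range.1 hs; omega
  simp only [map_mul, map_pow, hz, hw, hC]
  simp only [map_mul, map_pow, dehom_C, dehom_z, dehom_w, mul_pow, one_pow, mul_one]
  have key : eps N ^ (j * (M * N + i)) =
      (eps N ^ j) ^ ((M - s) * N + i) * (eps N ^ (-(j : ℤ))) ^ (N * s) := by
    obtain ⟨t, rfl⟩ := Nat.exists_eq_add_of_le hs'
    have h1 := (eps_prim N hN).pow_eq_one
    have e0 := eps_ne N
    have h2 : (eps N ^ (-(j : ℤ))) ^ (N * s) * eps N ^ (j * (N * s)) = 1 := by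
      rw [pow_mul _ j, ← mul_pow, zpow_neg, zpow_natCast, inv_mul_cancel₀ (pow_ne_zero _ e0),
        one_pow]
    have h3 : eps N ^ (j * (N * s)) * eps N ^ (j * (N * s)) = 1 := by
      rw [← pow_add, show j * (N * s) + j * (N * s) = 2 * N * (j * s) by ring, pow_mul, h1,
        one_pow]
    have h4 : (eps N ^ (-(j : ℤ))) ^ (N * s) = eps N ^ (j * (N * s)) := by
      have := mul_ne_zero_iff.1 (h3.trans_ne one_ne_zero)
      exact mul_right_cancel₀ this.1 (h2.trans h3.symm)
    rw [h4, ← pow_mul, ← pow_add]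
    congr 1
    rw [Nat.add_sub_cancel_left]
    ring
  have key2 := congrArg (Polynomial.C : ℂ → Polynomial ℂ) key
  simp only [map_mul, map_pow] at key2
  rw [key2]
  ring

lemma dvd_of_qi (N m n i : ℕ) (hN : 1 ≤ N) (b : ℕ → ℂ)
    (hb : IsQuasiInv N m n
      (∑ s ∈ Finset.range (m + n + 1),
        C (b s) * zP ^ ((m + n - s) * N + i) * wP ^ (N * s))) (j : ℕ) (hj : j < 2 * N) :
    (Polynomial.X - Polynomial.C (eps N ^ j)) ^ (2 * mult m n j + 1) ∣
      Polynomial.C (eps N ^ (j * ((m + n) * N + i))) * kPoly N (m + n) b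
        - qPoly N (m + n) i b := by
  have h := map_dvd dehom (hb j hj)
  rw [map_sub, dehom_q, dehom_k _ _ _ _ hN] at h
  simpa [zP, wP, dehom_C, dehom_z, dehom_w] using h

lemma sum_mult (m n N : ℕ) :
    ∑ j ∈ Finset.range (2 * N), 2 * mult m n j = 2 * N * (m + n) := by
  induction N with
  | zero => simp
  | succ k ih =>
    rw [show 2 * (k + 1) = 2 * k + 1 + 1 by ring, Finset.sum_range_succ, Finset.sum_range_succ, ih]
    have h1 : mult m n (2 * k) = m := by simp [mult]
    have h2 : mult m n (2 * k + 1) = n := by simp [mult]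
    rw [h1, h2]; ring

lemma X_der_coeff (p : Polynomial ℂ) (d : ℕ) :
    (Polynomial.X * p.derivative).coeff d = d * p.coeff d := by
  cases d with
  | zero => simp
  | succ d => rw [Polynomial.coeff_X_mul, Polynomial.coeff_derivative]; push_cast; ring

lemma natDegree_eq_of_wr (p q : Polynomial ℂ) (hp : p ≠ 0) (hq : q ≠ 0)
    (h : p.derivative * q - p * q.derivative = 0) : p.natDegree = q.natDegree := by
  have h1 : (Polynomial.X * p.derivative) * q = p * (Polynomial.X * q.derivative) := by
    linear_combination Polynomial.X * h
  have hX : ∀ r : Polynomial ℂ, (Polynomial.X * r.derivative).natDegree ≤ r.natDegree := by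
    intro r
    rw [Polynomial.natDegree_le_iff_coeff_eq_zero]
    intro k hk
    rw [X_der_coeff, Polynomial.coeff_eq_zero_of_natDegree_lt hk, mul_zero]
  have h2 := congrArg (fun r => r.coeff (p.natDegree + q.natDegree)) h1
  beta_reduce at h2
  rw [Polynomial.coeff_mul_add_eq_of_natDegree_le (hX p) le_rfl,
    Polynomial.coeff_mul_add_eq_of_natDegree_le le_rfl (hX q), X_der_coeff, X_der_coeff] at h2
  have a1 : p.coeff p.natDegree ≠ 0 := Polynomial.leadingCoeff_ne_zero.2 hp
  have a2 : q.coeff q.natDegree ≠ 0 := Polynomial.leadingCoeff_ne_zero.2 hq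
  have h3 : (p.natDegree : ℂ) = q.natDegree := by
    apply mul_right_cancel₀ (mul_ne_zero a1 a2)
    linear_combination h2
  exact_mod_cast h3

lemma wr_dvd (K Q : Polynomial ℂ) (c r : ℂ) (hc : c ≠ 0) (e : ℕ)
    (h : (Polynomial.X - Polynomial.C r) ^ (e + 1) ∣ Polynomial.C c * K - Q) :
    (Polynomial.X - Polynomial.C r) ^ e ∣ K.derivative * Q - K * Q.derivative := by
  have h1 := Polynomial.pow_sub_one_dvd_derivative_of_pow_dvd h
  rw [Nat.add_sub_cancel] at h1
  have h0 := (pow_dvd_pow (Polynomial.X - Polynomial.C r) (Nat.le_succ e)).trans h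
  have h2 : K.derivative * Q - K * Q.derivative =
      (Polynomial.C c * K - Q) * (-K.derivative)
        + (Polynomial.C c * K - Q).derivative * K := by
    simp only [Polynomial.derivative_sub, Polynomial.derivative_mul, Polynomial.derivative_C]
    ring
  rw [h2]
  exact dvd_add (h0.mul_right _) (h1.mul_right _)

lemma kPoly_coeff (N M : ℕ) (b : ℕ → ℂ) (d : ℕ) :
    (kPoly N M b).coeff d = ∑ s ∈ Finset.range (M + 1), if d = N * s then b s else 0 := by
  simp [kPoly, Polynomial.finsetSum_coeff, Polynomial.coeff_X_pow]

lemma qPoly_coeff (N M i : ℕ) (b : ℕ → ℂ) (d : ℕ) :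
    (qPoly N M i b).coeff d =
      ∑ s ∈ Finset.range (M + 1), if d = (M - s) * N + i then b s else 0 := by
  simp [qPoly, Polynomial.finsetSum_coeff, Polynomial.coeff_X_pow]

theorem core (N m n i : ℕ) (hN : 1 ≤ N)
    (hi1 : 1 ≤ i) (hi2 : i ≤ 2 * N - 1) (hiN : i ≠ N) (b : ℕ → ℂ) (hb0 : b 0 = 0)
    (h : ∀ j < 2 * N, (Polynomial.X - Polynomial.C (eps N ^ j)) ^ (2 * mult m n j + 1) ∣
      Polynomial.C (eps N ^ (j * ((m + n) * N + i))) * kPoly N (m + n) b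
        - qPoly N (m + n) i b) : ∀ s ≤ m + n, b s = 0 := by
  by_contra! hcon
  obtain ⟨s₀, hs₀, hbs⟩ := hcon
  have hs₁ : s₀ ≠ 0 := by rintro rfl; exact hbs hb0
  generalize hM : m + n = M at *
  set K := kPoly N M b with hK
  set Q := qPoly N M i b with hQ
  have hK0 : K ≠ 0 := by
    intro h0
    have h1 := kPoly_coeff N M b (N * s₀)
    rw [← hK, h0, Polynomial.coeff_zero, Finset.sum_eq_single s₀] at h1
    · simp at h1; exact hbs h1.symm
    · intro t _ hts
      rw [if_neg]
      intro h2
      exact hts (Nat.eq_of_mul_eq_mul_left hN h2).symm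
    · intro h2; exact absurd (Finset.mem_range.2 (by omega)) h2
  have hQ0 : Q ≠ 0 := by
    intro h0
    have h1 := qPoly_coeff N M i b ((M - s₀) * N + i)
    rw [← hQ, h0, Polynomial.coeff_zero, Finset.sum_eq_single s₀] at h1
    · simp at h1; exact hbs h1.symm
    · intro t ht hts
      rw [if_neg]
      intro h2
      have h3 := Nat.eq_of_mul_eq_mul_right hN (Nat.add_right_cancel h2)
      have := Finset.mem_range.1 ht
      omega
    · intro h2; exact absurd (Finset.mem_range.2 (by omega)) h2
  have hKd : K.natDegree ≤ M * N := by
    refine Polynomial.natDegree_sum_le_of_forall_le _ _ fun s hs => ?_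
    refine (Polynomial.natDegree_C_mul_X_pow_le _ _).trans ?_
    rw [mul_comm]
    exact Nat.mul_le_mul_right _ (by have := Finset.mem_range.1 hs; omega)
  have hQd : Q.natDegree ≤ (M - 1) * N + i := by
    refine Polynomial.natDegree_sum_le_of_forall_le _ _ fun s hs => ?_
    rcases Nat.eq_zero_or_pos s with rfl | hs
    · simp [hb0]
    refine (Polynomial.natDegree_C_mul_X_pow_le _ _).trans ?_
    exact Nat.add_le_add_right (Nat.mul_le_mul_right _ (by omega)) _
  have hXQ : Polynomial.X ^ i ∣ Q := by
    refine Finset.dvd_sum fun s _ => Dvd.dvd.mul_left (pow_dvd_pow _ (by omega)) _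
  set W := K.derivative * Q - K * Q.derivative with hW
  have hXW : Polynomial.X ^ (i - 1) ∣ W := by
    have h1 := Polynomial.pow_sub_one_dvd_derivative_of_pow_dvd hXQ
    have h2 := (pow_dvd_pow (Polynomial.X : Polynomial ℂ) (Nat.sub_le i 1)).trans hXQ
    exact dvd_sub (h2.mul_left _) (h1.mul_left _)
  have hjW : ∀ j < 2 * N, (Polynomial.X - Polynomial.C (eps N ^ j)) ^ (2 * mult m n j) ∣ W :=
    fun j hj => wr_dvd K Q _ _ (pow_ne_zero _ (eps_ne N)) _ (h j hj)
  set P : Polynomial ℂ := ∏ j ∈ Finset.range (2 * N),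
    (Polynomial.X - Polynomial.C (eps N ^ j)) ^ (2 * mult m n j) with hP
  have hPW : P ∣ W := by
    refine Finset.prod_dvd_of_coprime ?_ fun j hj => hjW j (Finset.mem_range.1 hj)
    intro j hj k hk hjk
    refine IsCoprime.pow ?_
    refine Polynomial.isCoprime_X_sub_C_of_isUnit_sub (Ne.isUnit (sub_ne_zero.2 ?_))
    intro he
    exact hjk ((eps_prim N hN).pow_inj (by simpa using hj) (by simpa using hk) he)
  have hcop : IsCoprime (Polynomial.X ^ (i - 1)) P := by
    refine IsCoprime.pow_left (IsCoprime.prod_right fun j _ => IsCoprime.pow_right ?_)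
    have := Polynomial.isCoprime_X_sub_C_of_isUnit_sub (a := (0 : ℂ)) (b := eps N ^ j)
      (Ne.isUnit (sub_ne_zero.2 (pow_ne_zero _ (eps_ne N)).symm))
    simpa using this
  have hPmon : P.Monic := Polynomial.monic_prod_of_monic _ _ fun j _ =>
    (Polynomial.monic_X_sub_C _).pow _
  have hPd : P.natDegree = 2 * N * M := by
    rw [hP, Polynomial.natDegree_prod_of_monic _ _ fun j _ => (Polynomial.monic_X_sub_C _).pow _,
      ← hM, ← sum_mult]
    refine Finset.sum_congr rfl fun j _ => ?_
    rw [Polynomial.natDegree_pow, Polynomial.natDegree_X_sub_C, mul_one]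
  have hdvd := hcop.mul_dvd hXW hPW
  have hWd : W.natDegree ≤ M * N + ((M - 1) * N + i) - 1 := by
    have hMN : 1 ≤ M * N := Nat.mul_pos (by omega) hN
    refine (Polynomial.natDegree_sub_le _ _).trans (max_le ?_ ?_)
    · refine Polynomial.natDegree_mul_le.trans ?_
      have := Polynomial.natDegree_derivative_le K
      omega
    · refine Polynomial.natDegree_mul_le.trans ?_
      have := Polynomial.natDegree_derivative_le Q
      omega
  have hW0 : W = 0 := by
    by_contra hne
    have h1 := Polynomial.natDegree_le_of_dvd hdvd hne
    rw [(Polynomial.monic_X_pow _).natDegree_mul hPmon, Polynomial.natDegree_X_pow, hPd] at h1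
    obtain ⟨M', rfl⟩ : ∃ M', M = M' + 1 := ⟨M - 1, by omega⟩
    rw [Nat.add_sub_cancel] at hWd
    have e1 : 2 * N * (M' + 1) = 2 * (M' * N) + 2 * N := by ring
    have e2 : (M' + 1) * N = M' * N + N := by ring
    omega
  have hdeg := natDegree_eq_of_wr K Q hK0 hQ0 hW0
  have hKl := Polynomial.leadingCoeff_ne_zero.2 hK0
  have hQl := Polynomial.leadingCoeff_ne_zero.2 hQ0
  rw [Polynomial.leadingCoeff, hK, kPoly_coeff, ← hK] at hKl
  rw [Polynomial.leadingCoeff, hQ, qPoly_coeff, ← hQ] at hQl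
  obtain ⟨s, _, hs⟩ := Finset.exists_ne_zero_of_sum_ne_zero hKl
  obtain ⟨t, _, ht⟩ := Finset.exists_ne_zero_of_sum_ne_zero hQl
  have hs' : K.natDegree = N * s := by by_contra hh; exact hs (if_neg hh)
  have ht' : Q.natDegree = (M - t) * N + i := by by_contra hh; exact ht (if_neg hh)
  have hNi : N ∣ i := by
    have e : N * s = (M - t) * N + i := by omega
    exact (Nat.dvd_add_right (Dvd.intro_left _ rfl)).1 (e ▸ Dvd.intro _ rfl)
  obtain ⟨k, rfl⟩ := hNi
  rcases k with _ | _ | k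
  · simp at hi1
  · simp at hiN
  · have : N * (k + 1 + 1) = N * k + 2 * N := by ring
    omega

theorem quasiInvariant_q1i_unique (N m n i : ℕ) (hN : 1 ≤ N) (hnm : n ≤ m)
    (hi1 : 1 ≤ i) (hi2 : i ≤ 2 * N - 1) (hiN : i ≠ N)
    (a a' : ℕ → ℂ) (ha0 : a 0 = 1) (ha'0 : a' 0 = 1)
    (ha : IsQuasiInv N m n
      (∑ s ∈ Finset.range (m + n + 1),
        C (a s) * zP ^ ((m + n - s) * N + i) * wP ^ (N * s)))
    (ha' : IsQuasiInv N m n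
      (∑ s ∈ Finset.range (m + n + 1),
        C (a' s) * zP ^ ((m + n - s) * N + i) * wP ^ (N * s))) :
    ∀ s ≤ m + n, a s = a' s := by
  intro s hs
  refine sub_eq_zero.1 (core N m n i hN hi1 hi2 hiN (fun s => a s - a' s) (by simp [ha0, ha'0])
    (fun j hj => ?_) s hs)
  have h := dvd_sub (dvd_of_qi N m n i hN a ha j hj) (dvd_of_qi N m n i hN a' ha' j hj)
  have e1 : kPoly N (m + n) (fun s => a s - a' s) = kPoly N (m + n) a - kPoly N (m + n) a' := by
    simp [kPoly, sub_mul]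
  have e2 : qPoly N (m + n) i (fun s => a s - a' s)
      = qPoly N (m + n) i a - qPoly N (m + n) i a' := by
    simp [qPoly, sub_mul]
  rw [e1, e2]
  convert h using 1
  ring
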